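/- arXiv:1807.00379 — 3 statements merged into one kernel-verified Lean document; each statement's English description precedes it below -/
import Mathlib

section
/- The dual cone of SDD^n_+ := SDD^n ∩ N^n satisfies (SDD^n_+)* = (SDD^n)* + N^n, i.e., it equals the Minkowski sum of the dual cone of SDD^n and the cone of symmetric entrywise nonnegative matrices. -/
open Matrix Set

noncomputable section

/-- The embedding `ι_{ij} : S² → Sⁿ` placing a 2×2 symmetric matrix into
rows/columns `i, j` with zeros elsewhere. -/
def iota {n : ℕ} (i j : Fin n) (S : Matrix (Fin 2) (Fin 2) ℝ) :
    Matrix (Fin n) (Fin n) ℝ :=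
  Matrix.of fun r s =>
    (if r = i ∧ s = i then S 0 0 else 0) +
    (if r = i ∧ s = j then S 0 1 else 0) +
    (if r = j ∧ s = i then S 1 0 else 0) +
    (if r = j ∧ s = j then S 1 1 else 0)

/-- The cone `SDDⁿ = Σ_{i<j} ι_{ij}(S²₊)` of scaled diagonally dominant matrices. -/
def SDD (n : ℕ) : Set (Matrix (Fin n) (Fin n) ℝ) :=
  {X | ∃ S : Fin n → Fin n → Matrix (Fin 2) (Fin 2) ℝ,
    (∀ i j : Fin n, (S i j).PosSemidef) ∧
    X = ∑ i : Fin n, ∑ j : Fin n, if i < j then iota i j (S i j) else 0}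

/-- `Nⁿ`: symmetric entrywise nonnegative matrices. -/
def NonnegMat (n : ℕ) : Set (Matrix (Fin n) (Fin n) ℝ) :=
  {X | X.IsSymm ∧ ∀ i j, 0 ≤ X i j}

/-- Dual cone within the space of symmetric matrices, w.r.t. the trace inner product. -/
def dualCone {n : ℕ} (C : Set (Matrix (Fin n) (Fin n) ℝ)) :
    Set (Matrix (Fin n) (Fin n) ℝ) :=
  {Y | Y.IsSymm ∧ ∀ X ∈ C, 0 ≤ (X * Y).trace}

open scoped Pointwise

/-- The trace pairing with `iota i j S` only sees the `{i, j}` block. -/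
lemma trace_iota_mul {n : ℕ} (i j : Fin n) (S : Matrix (Fin 2) (Fin 2) ℝ)
    (Y : Matrix (Fin n) (Fin n) ℝ) :
    (iota i j S * Y).trace = S 0 0 * Y i i + S 0 1 * Y j i + S 1 0 * Y i j + S 1 1 * Y j j := by
  simp [iota, Matrix.trace, Matrix.mul_apply, add_mul, Finset.sum_add_distrib, ite_and]

lemma iota_mem_SDD {n : ℕ} {i j : Fin n} (hij : i < j) {S : Matrix (Fin 2) (Fin 2) ℝ}
    (hS : S.PosSemidef) : iota i j S ∈ SDD n := by
  refine ⟨fun k l => if k = i ∧ l = j then S else 0, fun k l => ?_, ?_⟩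
  · dsimp only
    split_ifs
    · exact hS
    · exact Matrix.PosSemidef.zero
  · rw [Finset.sum_eq_single i, Finset.sum_eq_single j]
    · simp [hij]
    · intro l _ hl
      split_ifs <;> ext r s <;> simp [hl, iota]
    · simp
    · intro k _ hk
      refine Finset.sum_eq_zero fun l _ => ?_
      split_ifs <;> ext r s <;> simp [hk, iota]
    · simp

lemma iota_mem_NonnegMat {n : ℕ} (i j : Fin n) {S : Matrix (Fin 2) (Fin 2) ℝ}
    (hS : S ∈ NonnegMat 2) : iota i j S ∈ NonnegMat n := by
  obtain ⟨hsymm, hpos⟩ := hS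
  constructor
  · ext r s
    simp only [iota, Matrix.transpose_apply, Matrix.of_apply, hsymm.apply 0 1]
    simp only [and_comm]
    ring
  · intro r s
    simp only [iota, Matrix.of_apply]
    have h (p : Prop) [Decidable p] (a b : Fin 2) : 0 ≤ if p then S a b else 0 := by
      split_ifs
      · exact hpos a b
      · exact le_rfl
    linarith [h (r = i ∧ s = i) 0 0, h (r = i ∧ s = j) 0 1, h (r = j ∧ s = i) 1 0,
      h (r = j ∧ s = j) 1 1]

/-- Necessary conditions for a binary quadratic form to be copositive. -/
lemma copositive_binary {p q r : ℝ}
    (h : ∀ a b : ℝ, 0 ≤ a → 0 ≤ b → 0 ≤ a ^ 2 * p + 2 * (a * b) * q + b ^ 2 * r) :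
    0 ≤ p ∧ 0 ≤ r ∧ -√(p * r) ≤ q := by
  have hp : 0 ≤ p := by simpa using h 1 0 zero_le_one le_rfl
  have hr : 0 ≤ r := by simpa using h 0 1 le_rfl zero_le_one
  refine ⟨hp, hr, ?_⟩
  by_contra! hq
  have hq0 : q < 0 := hq.trans_le (neg_nonpos.2 (Real.sqrt_nonneg _))
  have hqq : 0 < q ^ 2 := sq_pos_of_neg hq0
  rcases hp.eq_or_lt with rfl | hp'
  · have := h (r + 1) (-q) (by linarith) (by linarith)
    nlinarith [mul_nonneg hr hqq.le]
  rcases hr.eq_or_lt with rfl | hr'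
  · have := h (-q) (p + 1) (by linarith) (by linarith)
    nlinarith [mul_nonneg hp hqq.le]
  have hh := h (√r) (√p) (Real.sqrt_nonneg _) (Real.sqrt_nonneg _)
  rw [Real.sq_sqrt hr, Real.sq_sqrt hp, mul_comm (√r), ← Real.sqrt_mul hp] at hh
  have ht : 0 < √(p * r) := Real.sqrt_pos.2 (mul_pos hp' hr')
  nlinarith [Real.sq_sqrt (mul_nonneg hp hr)]

/-- A positive semidefinite 2×2 matrix pairs nonnegatively with a symmetric 2×2 matrix
with nonnegative diagonal `p, r` and off-diagonal entry `q` satisfying `|q| ≤ √(p * r)`. -/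
lemma Matrix.PosSemidef.pairing_nonneg {S : Matrix (Fin 2) (Fin 2) ℝ} (hS : S.PosSemidef)
    {p q r : ℝ} (hp : 0 ≤ p) (hr : 0 ≤ r) (hq : |q| ≤ √(p * r)) :
    0 ≤ S 0 0 * p + S 0 1 * q + S 1 0 * q + S 1 1 * r := by
  have hsymm : S 1 0 = S 0 1 := by simpa using hS.isHermitian.apply 0 1
  have key (a b : ℝ) : 0 ≤ S 0 0 * a ^ 2 + 2 * S 0 1 * (a * b) + S 1 1 * b ^ 2 := by
    have := hS.dotProduct_mulVec_nonneg ![a, b]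
    simp only [dotProduct, Matrix.mulVec, Fin.sum_univ_two, star_trivial, Matrix.cons_val_zero,
      Matrix.cons_val_one, hsymm] at this
    linarith
  have h₁ := key (√p) (√r)
  have h₂ := key (√p) (-√r)
  rw [mul_neg, neg_sq] at h₂
  rw [Real.sq_sqrt hp, Real.sq_sqrt hr, ← Real.sqrt_mul hp] at h₁ h₂
  obtain ⟨hq₁, hq₂⟩ := abs_le.1 hq
  rw [hsymm]
  rcases le_total 0 (S 0 1) with h | h <;> nlinarith

/-- Sufficient entrywise conditions for membership in the dual of the cone `SDD n`. -/
lemma mem_dualCone_SDD {n : ℕ} {A : Matrix (Fin n) (Fin n) ℝ} (hA : A.IsSymm)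
    (h : ∀ i j, i < j → 0 ≤ A i i ∧ 0 ≤ A j j ∧ |A i j| ≤ √(A i i * A j j)) :
    A ∈ dualCone (SDD n) := by
  refine ⟨hA, ?_⟩
  rintro _ ⟨S, hS, rfl⟩
  simp only [Finset.sum_mul, Matrix.trace_sum]
  refine Finset.sum_nonneg fun i _ => Finset.sum_nonneg fun j _ => ?_
  split_ifs with hij
  · obtain ⟨hi, hj, hq⟩ := h i j hij
    rw [trace_iota_mul, hA.apply i j]
    exact (hS i j).pairing_nonneg hi hj hq
  · simp

/-- Necessary entrywise conditions for membership in the dual of `SDD n ∩ NonnegMat n`. -/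
lemma entries_of_mem_dualCone {n : ℕ} {Y : Matrix (Fin n) (Fin n) ℝ}
    (hY : Y ∈ dualCone (SDD n ∩ NonnegMat n)) {i j : Fin n} (hij : i < j) :
    0 ≤ Y i i ∧ 0 ≤ Y j j ∧ -√(Y i i * Y j j) ≤ Y i j := by
  obtain ⟨hsymm, hY⟩ := hY
  refine copositive_binary fun a b ha hb => ?_
  have hpsd : (Matrix.vecMulVec ![a, b] ![a, b]).PosSemidef := by
    simpa using Matrix.posSemidef_vecMulVec_self_star ![a, b]
  have hnn : Matrix.vecMulVec ![a, b] ![a, b] ∈ NonnegMat 2 := by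
    refine ⟨by simpa [Matrix.IsSymm] using hpsd.isHermitian, fun k l => ?_⟩
    fin_cases k <;> fin_cases l <;> simp [Matrix.vecMulVec_apply] <;> positivity
  have := hY _ ⟨iota_mem_SDD hij hpsd, iota_mem_NonnegMat i j hnn⟩
  rw [trace_iota_mul, hsymm.apply i j] at this
  simp only [Matrix.vecMulVec_apply, Matrix.cons_val_zero, Matrix.cons_val_one] at this
  linarith

lemma trace_mul_nonneg_of_mem_NonnegMat {n : ℕ} {X B : Matrix (Fin n) (Fin n) ℝ}
    (hX : X ∈ NonnegMat n) (hB : B ∈ NonnegMat n) : 0 ≤ (X * B).trace := by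
  simp only [Matrix.trace, Matrix.diag_apply, Matrix.mul_apply]
  exact Finset.sum_nonneg fun i _ => Finset.sum_nonneg fun j _ =>
    mul_nonneg (hX.2 i j) (hB.2 j i)

/-- `(SDDⁿ₊)* = (SDDⁿ)* + Nⁿ`, where `SDDⁿ₊ = SDDⁿ ∩ Nⁿ`. -/
theorem dual_SDDplus (n : ℕ) :
    dualCone (SDD n ∩ NonnegMat n) = dualCone (SDD n) + NonnegMat n := by
  ext Y
  constructor
  · intro hY
    have hsymm := hY.1
    let A : Matrix (Fin n) (Fin n) ℝ := Matrix.of fun i j => min (Y i j) √(Y i i * Y j j)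
    have hA : A.IsSymm := by
      ext i j
      simp only [A, Matrix.transpose_apply, Matrix.of_apply, hsymm.apply i j, mul_comm]
    have hdiag (i : Fin n) : A i i = Y i i := by
      simp only [A, Matrix.of_apply, Real.sqrt_mul_self_eq_abs]
      exact min_eq_left (le_abs_self _)
    refine ⟨A, mem_dualCone_SDD hA fun i j hij => ?_, Y - A, ⟨hsymm.sub hA, fun i j => ?_⟩,
      add_sub_cancel A Y⟩
    · obtain ⟨hi, hj, hq⟩ := entries_of_mem_dualCone hY hij
      rw [hdiag, hdiag]
      refine ⟨hi, hj, abs_le.2 ⟨le_min hq ?_, min_le_right _ _⟩⟩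
      exact neg_le_self (Real.sqrt_nonneg _)
    · exact sub_nonneg.2 (min_le_left _ _)
  · rintro ⟨A, hA, B, hB, rfl⟩
    refine ⟨hA.1.add hB.1, fun X hX => ?_⟩
    rw [Matrix.mul_add, Matrix.trace_add]
    exact add_nonneg (hA.2 X hX.1) (trace_mul_nonneg_of_mem_NonnegMat hX.2 hB)

end
end

section
/- Let U ∈ R^{t×n} have nonnegative entries with each row summing to 1, and let u_i denote the i-th row of U. Then SDD^n_+(U) := U^T (SDD^t_+) U equals the conic hull of all matrices vv^T with v belonging to some line segment [u_i, u_j] for 1 ≤ i < j ≤ t. -/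
open Matrix Set

noncomputable section

/-- `SDDⁿ₊ = SDDⁿ ∩ Nⁿ`. -/
def SDDplus (n : ℕ) : Set (Matrix (Fin n) (Fin n) ℝ) := SDD n ∩ NonnegMat n

/-- `SDDⁿ₊(U) = Uᵀ (SDDᵗ₊) U`. -/
def SDDplusU {t n : ℕ} (U : Matrix (Fin t) (Fin n) ℝ) :
    Set (Matrix (Fin n) (Fin n) ℝ) :=
  {X | ∃ Y ∈ SDDplus t, X = Uᵀ * Y * U}

/-- The conic hull: finite nonnegative combinations of elements of `s`. -/
def conicHull {α : Type*} [AddCommMonoid α] [Module ℝ α] (s : Set α) : Set α :=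
  {x | ∃ (N : ℕ) (c : Fin N → ℝ) (v : Fin N → α),
    (∀ k, 0 ≤ c k) ∧ (∀ k, v k ∈ s) ∧ x = ∑ k, c k • v k}

/-- The completely positive cone `CPⁿ`. -/
def CP (n : ℕ) : Set (Matrix (Fin n) (Fin n) ℝ) :=
  {X | ∃ (k : ℕ) (B : Matrix (Fin k) (Fin n) ℝ), (∀ i j, 0 ≤ B i j) ∧ X = Bᵀ * B}

theorem zero_mem_conicHull {α : Type*} [AddCommMonoid α] [Module ℝ α] (s : Set α) :
    (0 : α) ∈ conicHull s :=
  ⟨0, Fin.elim0, Fin.elim0, fun k => k.elim0, fun k => k.elim0, by simp⟩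

theorem add_mem_conicHull {α : Type*} [AddCommMonoid α] [Module ℝ α] {s : Set α} {x y : α}
    (hx : x ∈ conicHull s) (hy : y ∈ conicHull s) : x + y ∈ conicHull s := by
  obtain ⟨N, c, v, hc, hv, rfl⟩ := hx
  obtain ⟨M, d, w, hd, hw, rfl⟩ := hy
  refine ⟨N + M, Fin.append c d, Fin.append v w, fun k => ?_, fun k => ?_, ?_⟩
  · induction k using Fin.addCases <;> simp [hc, hd]
  · induction k using Fin.addCases <;> simp [hv, hw]
  · simp [Fin.sum_univ_add]

theorem smul_mem_conicHull {α : Type*} [AddCommMonoid α] [Module ℝ α] {s : Set α} {x : α}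
    {c : ℝ} (hc : 0 ≤ c) (hx : x ∈ s) : c • x ∈ conicHull s :=
  ⟨1, fun _ => c, fun _ => x, fun _ => hc, fun _ => hx, by simp⟩

theorem iota_eq_sum_single {n : ℕ} (i j : Fin n) (S : Matrix (Fin 2) (Fin 2) ℝ) :
    iota i j S = S 0 0 • single i i 1 + S 0 1 • single i j 1 +
      S 1 0 • single j i 1 + S 1 1 • single j j 1 := by
  ext r s
  simp [iota, single_apply, eq_comm]

theorem iota_zero {n : ℕ} (i j : Fin n) : iota i j 0 = 0 := by
  simp [iota_eq_sum_single]

theorem iota_add {n : ℕ} (i j : Fin n) (S T : Matrix (Fin 2) (Fin 2) ℝ) :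
    iota i j (S + T) = iota i j S + iota i j T := by
  simp only [iota_eq_sum_single, Matrix.add_apply, add_smul]
  abel

theorem iota_smul {n : ℕ} (i j : Fin n) (c : ℝ) (S : Matrix (Fin 2) (Fin 2) ℝ) :
    iota i j (c • S) = c • iota i j S := by
  simp only [iota_eq_sum_single, Matrix.smul_apply, smul_add, smul_smul, smul_eq_mul]

theorem transpose_mul_single_mul {t n : ℕ} (U : Matrix (Fin t) (Fin n) ℝ) (i j : Fin t) :
    Uᵀ * single i j (1 : ℝ) * U = vecMulVec (U i) (U j) := by
  rw [single_eq_single_vecMulVec_single, mul_vecMulVec, vecMulVec_mul, mulVec_single_one,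
    single_one_vecMul]
  rfl

theorem transpose_mul_iota_mul {t n : ℕ} (U : Matrix (Fin t) (Fin n) ℝ) (i j : Fin t)
    (S : Matrix (Fin 2) (Fin 2) ℝ) :
    Uᵀ * iota i j S * U = S 0 0 • vecMulVec (U i) (U i) + S 0 1 • vecMulVec (U i) (U j) +
      S 1 0 • vecMulVec (U j) (U i) + S 1 1 • vecMulVec (U j) (U j) := by
  simp only [iota_eq_sum_single, Matrix.mul_add, Matrix.add_mul, Matrix.mul_smul,
    Matrix.smul_mul, transpose_mul_single_mul]

theorem sum_iota_apply_of_lt {n : ℕ} (S : Fin n → Fin n → Matrix (Fin 2) (Fin 2) ℝ)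
    {i j : Fin n} (hij : i < j) :
    (∑ k : Fin n, ∑ l : Fin n, if k < l then iota k l (S k l) else 0) i j = S i j 0 1 := by
  simp only [Matrix.sum_apply]
  rw [Finset.sum_eq_single i, Finset.sum_eq_single j]
  · simp [hij, iota, hij.ne, hij.ne']
  · intro l _ hl
    split_ifs <;> simp [iota, hij.ne', hl.symm]
  · simp
  · intro k _ hk
    refine Finset.sum_eq_zero fun l _ => ?_
    split_ifs with h
    · have : ¬ (i = l ∧ j = k) := by rintro ⟨rfl, rfl⟩; exact absurd h hij.not_gt
      have : ¬ (i = l ∧ j = l) := by rintro ⟨rfl, rfl⟩; exact absurd hij (lt_irrefl _)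
      simp [iota, hk.symm, *]
    · simp
  · simp

theorem single_iota_eq_sum {n : ℕ} {i j : Fin n} (hij : i < j)
    (S : Matrix (Fin 2) (Fin 2) ℝ) :
    iota i j S = ∑ k : Fin n, ∑ l : Fin n,
      if k < l then iota k l (if k = i ∧ l = j then S else 0) else 0 := by
  rw [Finset.sum_eq_single i, Finset.sum_eq_single j]
  · simp [hij]
  · intro l _ hl
    simp [hl, iota_zero]
  · simp
  · intro k _ hk
    simp [hk, iota_zero]
  · simp

/-- A rank-one matrix built from a nonnegative combination of `x` and `y` is a nonnegative
multiple of one built from a point of the segment `[x, y]`. -/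
theorem exists_segment_vecMulVec {n : ℕ} (x y : Fin n → ℝ) {a b : ℝ} (ha : 0 ≤ a)
    (hb : 0 ≤ b) :
    ∃ v ∈ segment ℝ x y,
      vecMulVec (a • x + b • y) (a • x + b • y) = (a + b) ^ 2 • vecMulVec v v := by
  rcases (add_nonneg ha hb).eq_or_lt with h | h
  · obtain ⟨rfl, rfl⟩ : a = 0 ∧ b = 0 := ⟨by linarith, by linarith⟩
    exact ⟨x, left_mem_segment ℝ x y, by simp⟩
  · refine ⟨(a / (a + b)) • x + (b / (a + b)) • y,
      ⟨_, _, by positivity, by positivity, by field_simp, rfl⟩, ?_⟩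
    ext r s
    simp only [vecMulVec_apply, Pi.add_apply, Pi.smul_apply, Matrix.smul_apply, smul_eq_mul]
    field_simp

theorem iota_congr_mem_conicHull {t n : ℕ} (U : Matrix (Fin t) (Fin n) ℝ) {i j : Fin t}
    (hij : i < j) {S : Matrix (Fin 2) (Fin 2) ℝ} (hS : S.PosSemidef) (h01 : 0 ≤ S 0 1) :
    Uᵀ * iota i j S * U ∈
      conicHull {M | ∃ (i j : Fin t) (v : Fin n → ℝ),
        i < j ∧ v ∈ segment ℝ (U i) (U j) ∧ M = vecMulVec v v} := by
  have hpos : ∀ {a b : ℝ} (c : ℝ), 0 ≤ a → 0 ≤ b → 0 ≤ c →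
      c • vecMulVec (a • U i + b • U j) (a • U i + b • U j) ∈
        conicHull {M | ∃ (i j : Fin t) (v : Fin n → ℝ),
          i < j ∧ v ∈ segment ℝ (U i) (U j) ∧ M = vecMulVec v v} := by
    intro a b c ha hb hc
    obtain ⟨v, hv, h⟩ := exists_segment_vecMulVec (U i) (U j) ha hb
    rw [h, smul_smul]
    exact smul_mem_conicHull (by positivity) ⟨i, j, v, hij, hv, rfl⟩
  have h00 : 0 ≤ S 0 0 := hS.diag_nonneg
  have h11 : 0 ≤ S 1 1 := hS.diag_nonneg
  have hsymm : S 1 0 = S 0 1 := by simpa using hS.isHermitian.apply 0 1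
  have hdet : S 0 1 * S 0 1 ≤ S 0 0 * S 1 1 := by
    have := hS.det_nonneg
    rw [det_fin_two, hsymm] at this
    linarith
  rw [transpose_mul_iota_mul, hsymm]
  rcases h00.eq_or_lt with h | h
  · have h0 : S 0 1 = 0 := by
      rw [← h] at hdet
      nlinarith
    have := hpos (S 1 1) le_rfl zero_le_one h11
    simpa [h0, ← h] using this
  · have hschur : 0 ≤ S 1 1 - S 0 1 * S 0 1 / S 0 0 := by
      rw [sub_nonneg, div_le_iff₀ h]
      linarith
    convert add_mem_conicHull (hpos (S 0 0)⁻¹ h00 h01 (by positivity))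
      (hpos _ le_rfl zero_le_one hschur) using 1
    ext r s
    simp only [vecMulVec_apply, Pi.add_apply, Pi.smul_apply, Matrix.smul_apply, smul_eq_mul,
      Matrix.add_apply]
    field_simp
    ring

theorem zero_mem_SDDplus (n : ℕ) : (0 : Matrix (Fin n) (Fin n) ℝ) ∈ SDDplus n :=
  ⟨⟨fun _ _ => 0, fun _ _ => PosSemidef.zero, by simp [iota_zero]⟩, by simp [NonnegMat]⟩

theorem add_mem_SDDplus {n : ℕ} {X Y : Matrix (Fin n) (Fin n) ℝ} (hX : X ∈ SDDplus n)
    (hY : Y ∈ SDDplus n) : X + Y ∈ SDDplus n := by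
  obtain ⟨⟨S, hS, hXS⟩, hXs, hXn⟩ := hX
  obtain ⟨⟨T, hT, hYT⟩, hYs, hYn⟩ := hY
  refine ⟨⟨fun i j => S i j + T i j, fun i j => (hS i j).add (hT i j), ?_⟩,
    hXs.add hYs, fun i j => add_nonneg (hXn i j) (hYn i j)⟩
  rw [hXS, hYT]
  simp only [← Finset.sum_add_distrib, iota_add]
  refine Finset.sum_congr rfl fun i _ => Finset.sum_congr rfl fun j _ => ?_
  split_ifs <;> simp

theorem smul_mem_SDDplus {n : ℕ} {X : Matrix (Fin n) (Fin n) ℝ} {c : ℝ} (hc : 0 ≤ c)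
    (hX : X ∈ SDDplus n) : c • X ∈ SDDplus n := by
  obtain ⟨⟨S, hS, hXS⟩, hXs, hXn⟩ := hX
  refine ⟨⟨fun i j => c • S i j, fun i j => (hS i j).smul hc, ?_⟩,
    hXs.smul c, fun i j => mul_nonneg hc (hXn i j)⟩
  rw [hXS]
  simp only [Finset.smul_sum, iota_smul, smul_ite, smul_zero]

theorem iota_vecMulVec_mem_SDDplus {n : ℕ} {i j : Fin n} (hij : i < j) {a b : ℝ}
    (ha : 0 ≤ a) (hb : 0 ≤ b) : iota i j (vecMulVec ![a, b] ![a, b]) ∈ SDDplus n := by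
  refine ⟨⟨_, fun k l => ?_, single_iota_eq_sum hij _⟩, ?_, fun r s => ?_⟩
  · split_ifs
    · simpa using posSemidef_vecMulVec_self_star ![a, b]
    · exact PosSemidef.zero
  · ext r s
    simp [iota_eq_sum_single, single_apply, mul_comm b a, and_comm]
    ring
  · have := mul_nonneg ha hb
    simp only [iota, of_apply, vecMulVec_apply]
    refine add_nonneg (add_nonneg (add_nonneg ?_ ?_) ?_) ?_ <;> split_ifs <;> simp <;> positivity

/-- `SDDⁿ₊(U)` is the conic hull of all `vvᵀ` with `v ∈ [uᵢ, uⱼ]` for some `1 ≤ i < j ≤ t`. -/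
theorem SDDplusU_eq_conicHull {t n : ℕ} (U : Matrix (Fin t) (Fin n) ℝ)
    (hU : ∀ i j, 0 ≤ U i j) (hrow : ∀ i, ∑ j, U i j = 1) :
    SDDplusU U =
      conicHull {M | ∃ (i j : Fin t) (v : Fin n → ℝ),
        i < j ∧ v ∈ segment ℝ (U i) (U j) ∧ M = vecMulVec v v} := by
  ext X
  constructor
  · rintro ⟨Y, ⟨⟨S, hS, hYS⟩, -, hYn⟩, rfl⟩
    rw [hYS, Matrix.mul_sum, Matrix.sum_mul]
    refine Finset.sum_induction _ (· ∈ conicHull _) (fun _ _ => add_mem_conicHull)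
      (zero_mem_conicHull _) fun i _ => ?_
    rw [Matrix.mul_sum, Matrix.sum_mul]
    refine Finset.sum_induction _ (· ∈ conicHull _) (fun _ _ => add_mem_conicHull)
      (zero_mem_conicHull _) fun j _ => ?_
    split_ifs with hij
    · refine iota_congr_mem_conicHull U hij (hS i j) ?_
      rw [← sum_iota_apply_of_lt S hij, ← hYS]
      exact hYn i j
    · simpa using zero_mem_conicHull _
  · rintro ⟨N, c, v, hc, hv, rfl⟩
    refine Finset.sum_induction _ (· ∈ SDDplusU U) ?_
      ⟨0, zero_mem_SDDplus t, by simp⟩ fun k _ => ?_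
    · rintro _ _ ⟨Y, hY, rfl⟩ ⟨Z, hZ, rfl⟩
      exact ⟨Y + Z, add_mem_SDDplus hY hZ, by rw [Matrix.mul_add, Matrix.add_mul]⟩
    · obtain ⟨i, j, w, hij, ⟨a, b, ha, hb, -, rfl⟩, hw⟩ := hv k
      refine ⟨_, smul_mem_SDDplus (hc k) (iota_vecMulVec_mem_SDDplus hij ha hb), ?_⟩
      rw [hw, Matrix.mul_smul, Matrix.smul_mul, transpose_mul_iota_mul]
      ext r s
      simp only [vecMulVec_apply, Pi.add_apply, Pi.smul_apply, Matrix.smul_apply, smul_eq_mul,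
        Matrix.add_apply, cons_val_zero, cons_val_one]
      ring

end
end

section
/- Let G be a graph on vertices {1,…,t} with edge set E, and let U ∈ R^{t×n} have nonnegative entries with each row summing to 1. Then SDD^G_+(U) := U^T (SDD^G_+) U is a closed convex sub-cone of the completely positive cone CP^n. -/
open Matrix Set

noncomputable section

open scoped Classical in
/-- `SDD^G = Σ_{{i,j}∈E} ι_{ij}(S²₊)` (equal to `{0}` if `E = ∅`). -/
def SDDG {t : ℕ} (G : SimpleGraph (Fin t)) : Set (Matrix (Fin t) (Fin t) ℝ) :=
  {X | ∃ S : Fin t → Fin t → Matrix (Fin 2) (Fin 2) ℝ,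
    (∀ i j : Fin t, (S i j).PosSemidef) ∧
    X = ∑ i : Fin t, ∑ j : Fin t, if i < j ∧ G.Adj i j then iota i j (S i j) else 0}

/-- `SDD^G₊ = SDD^G ∩ Nᵗ`. -/
def SDDGplus {t : ℕ} (G : SimpleGraph (Fin t)) : Set (Matrix (Fin t) (Fin t) ℝ) :=
  SDDG G ∩ NonnegMat t

/-- `SDD^G₊(U) = Uᵀ (SDD^G₊) U`. -/
def SDDGplusU {t n : ℕ} (G : SimpleGraph (Fin t)) (U : Matrix (Fin t) (Fin n) ℝ) :
    Set (Matrix (Fin n) (Fin n) ℝ) :=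
  {X | ∃ Y ∈ SDDGplus G, X = Uᵀ * Y * U}

/-- `seg(G,U) = ∪_{{i,j}∈E} [uᵢ, uⱼ]`. -/
def seg {t n : ℕ} (G : SimpleGraph (Fin t)) (U : Matrix (Fin t) (Fin n) ℝ) :
    Set (Fin n → ℝ) :=
  {v | ∃ i j : Fin t, G.Adj i j ∧ v ∈ segment ℝ (U i) (U j)}

/-- The `2 × n` matrix whose rows are `eᵢ` and `eⱼ`. -/
def pairRows {n : ℕ} (i j : Fin n) : Matrix (Fin 2) (Fin n) ℝ :=
  Matrix.of ![fun r => if r = i then 1 else 0, fun r => if r = j then 1 else 0]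

lemma pairRows_nonneg {n : ℕ} (i j : Fin n) (a : Fin 2) (r : Fin n) : 0 ≤ pairRows i j a r := by
  fin_cases a <;> simp only [pairRows, Matrix.of_apply] <;> dsimp <;> split_ifs <;> norm_num

lemma sum_pairRows {n : ℕ} (i j : Fin n) (a : Fin 2) : ∑ r, pairRows i j a r = 1 := by
  fin_cases a <;> simp [pairRows]

lemma iota_eq_conj {n : ℕ} (i j : Fin n) (S : Matrix (Fin 2) (Fin 2) ℝ) :
    iota i j S = (pairRows i j)ᵀ * S * pairRows i j := by
  ext r s
  simp only [iota, pairRows, Matrix.of_apply, Matrix.mul_apply, Matrix.transpose_apply,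
    Fin.sum_univ_two, Matrix.cons_val_zero, Matrix.cons_val_one, ite_and]
  split_ifs <;> ring

lemma sum_entries_conj {α β : Type*} [Fintype α] [Fintype β] (U : Matrix α β ℝ)
    (hrow : ∀ i, ∑ j, U i j = 1) (A : Matrix α α ℝ) :
    ∑ r, ∑ s, (Uᵀ * A * U) r s = ∑ i, ∑ j, A i j := by
  have hU : U *ᵥ 1 = 1 := by
    ext i
    simpa [dotProduct, Matrix.mulVec] using hrow i
  calc ∑ r, ∑ s, (Uᵀ * A * U) r s = (1 : β → ℝ) ⬝ᵥ (Uᵀ * A * U) *ᵥ 1 := by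
        simp [dotProduct, Matrix.mulVec]
    _ = (1 : α → ℝ) ⬝ᵥ A *ᵥ 1 := by
        rw [← Matrix.mulVec_mulVec, hU, ← Matrix.mulVec_mulVec, Matrix.dotProduct_mulVec,
          Matrix.vecMul_transpose, hU]
    _ = ∑ i, ∑ j, A i j := by simp [dotProduct, Matrix.mulVec]

lemma zero_mem_CP (n : ℕ) : (0 : Matrix (Fin n) (Fin n) ℝ) ∈ CP n :=
  ⟨0, 0, by simp, by simp⟩

lemma add_mem_CP {n : ℕ} {X Y : Matrix (Fin n) (Fin n) ℝ} (hX : X ∈ CP n) (hY : Y ∈ CP n) :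
    X + Y ∈ CP n := by
  obtain ⟨k, B, hB, rfl⟩ := hX
  obtain ⟨l, C, hC, rfl⟩ := hY
  refine ⟨k + l, Matrix.of fun i j => Fin.append (fun i => B i j) (fun i => C i j) i, fun i j => ?_, ?_⟩
  · refine Fin.addCases (fun i => ?_) (fun i => ?_) i
    · simpa [Fin.append_left] using hB i j
    · simpa [Fin.append_right] using hC i j
  · ext r s
    simp [Matrix.mul_apply, Fin.sum_univ_add]

lemma sum_mem_CP {n : ℕ} {α : Type*} (s : Finset α) (f : α → Matrix (Fin n) (Fin n) ℝ)
    (h : ∀ a ∈ s, f a ∈ CP n) : ∑ a ∈ s, f a ∈ CP n :=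
  Finset.sum_induction f (· ∈ CP n) (fun _ _ => add_mem_CP) (zero_mem_CP n) h

lemma conj_mem_CP {m n : ℕ} {A : Matrix (Fin m) (Fin m) ℝ} (hA : A ∈ CP m)
    (P : Matrix (Fin m) (Fin n) ℝ) (hP : ∀ i j, 0 ≤ P i j) : Pᵀ * A * P ∈ CP n := by
  obtain ⟨k, B, hB, rfl⟩ := hA
  refine ⟨k, B * P, fun i j => ?_, ?_⟩
  · rw [Matrix.mul_apply]
    exact Finset.sum_nonneg fun x _ => mul_nonneg (hB i x) (hP x j)
  · simp [Matrix.transpose_mul, Matrix.mul_assoc]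

/-- The cone of positive semidefinite, entrywise nonnegative `2 × 2` matrices. -/
def DNN2 : Set (Matrix (Fin 2) (Fin 2) ℝ) :=
  {S | (∀ a b, 0 ≤ S a b) ∧ S 0 1 = S 1 0 ∧ S 0 1 * S 1 0 ≤ S 0 0 * S 1 1}

lemma posSemidef_of_mem_DNN2 {S : Matrix (Fin 2) (Fin 2) ℝ} (hS : S ∈ DNN2) :
    S.PosSemidef := by
  obtain ⟨h0, hs, hd⟩ := hS
  refine Matrix.PosSemidef.of_dotProduct_mulVec_nonneg ?_ fun x => ?_
  · ext a b
    fin_cases a <;> fin_cases b <;> simp [hs]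
  · simp only [dotProduct, Matrix.mulVec, Fin.sum_univ_two, star_trivial]
    rw [← hs] at hd ⊢
    have ha := h0 0 0
    have hc := h0 1 1
    rcases ha.eq_or_lt with ha0 | ha0
    · have hb : S 0 1 = 0 := by
        rw [← ha0] at hd
        nlinarith [sq_nonneg (S 0 1)]
      rw [← ha0, hb]
      nlinarith [mul_nonneg hc (sq_nonneg (x 1))]
    · refine (mul_nonneg_iff_of_pos_left ha0).1 ?_
      nlinarith [sq_nonneg (S 0 0 * x 0 + S 0 1 * x 1),
        mul_nonneg (sub_nonneg.2 hd) (sq_nonneg (x 1))]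

lemma mem_DNN2_of_posSemidef {S : Matrix (Fin 2) (Fin 2) ℝ} (hS : S.PosSemidef)
    (h : 0 ≤ S 0 1) : S ∈ DNN2 := by
  have hs : S 0 1 = S 1 0 := by simpa using (hS.1.apply 0 1).symm
  refine ⟨fun a b => ?_, hs, ?_⟩
  · fin_cases a <;> fin_cases b
    · exact hS.diag_nonneg
    · exact h
    · exact hs ▸ h
    · exact hS.diag_nonneg
  · have := hS.det_nonneg
    rw [Matrix.det_fin_two] at this
    linarith

lemma DNN2_subset_CP : DNN2 ⊆ CP 2 := by
  rintro S ⟨h0, hs, hd⟩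
  have ha := h0 0 0
  have hb := h0 0 1
  rw [← hs] at hd
  have hsch : 0 ≤ S 1 1 - S 0 1 ^ 2 / S 0 0 := by
    rcases ha.eq_or_lt with ha0 | ha0
    · simpa [← ha0] using h0 1 1
    · rw [sub_nonneg, div_le_iff₀ ha0]
      nlinarith
  have hb0 : S 0 0 = 0 → S 0 1 = 0 := by
    intro ha0
    rw [ha0] at hd
    nlinarith
  refine ⟨2, !![√(S 0 0), S 0 1 / √(S 0 0); 0, √(S 1 1 - S 0 1 ^ 2 / S 0 0)], fun a b => ?_, ?_⟩
  · fin_cases a <;> fin_cases b <;> (simp; try positivity)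
  · have hdiag : √(S 0 0) * (S 0 1 / √(S 0 0)) = S 0 1 := by
      rcases ha.eq_or_lt with ha0 | ha0
      · simp [hb0 ha0.symm]
      · have := Real.sqrt_pos.2 ha0
        field_simp
    have hsq : S 0 1 / √(S 0 0) * (S 0 1 / √(S 0 0)) = S 0 1 ^ 2 / S 0 0 := by
      rw [div_mul_div_comm, Real.mul_self_sqrt ha, sq]
    ext a b
    fin_cases a <;> fin_cases b
    · simp [Matrix.mul_apply, ha]
    · simp [Matrix.mul_apply, hdiag]
    · simp [Matrix.mul_apply, mul_comm _ √(S 0 0), hdiag, ← hs]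
    · simp [Matrix.mul_apply, hsq, Real.mul_self_sqrt hsch]

lemma isClosed_DNN2 : IsClosed DNN2 := by
  have hc : ∀ a b : Fin 2, Continuous fun S : Matrix (Fin 2) (Fin 2) ℝ => S a b :=
    fun a b => continuous_id.matrix_elem a b
  have h0 : IsClosed {S : Matrix (Fin 2) (Fin 2) ℝ | ∀ a b, 0 ≤ S a b} := by
    simp only [ofPred_forall]
    exact isClosed_iInter fun a => isClosed_iInter fun b => isClosed_le continuous_const (hc a b)
  exact h0.inter ((isClosed_eq (hc 0 1) (hc 1 0)).inter
    (isClosed_le ((hc 0 1).mul (hc 1 0)) ((hc 0 0).mul (hc 1 1))))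

lemma add_mem_DNN2 {S T : Matrix (Fin 2) (Fin 2) ℝ} (hS : S ∈ DNN2) (hT : T ∈ DNN2) :
    S + T ∈ DNN2 :=
  mem_DNN2_of_posSemidef ((posSemidef_of_mem_DNN2 hS).add (posSemidef_of_mem_DNN2 hT))
    (add_nonneg (hS.1 0 1) (hT.1 0 1))

lemma smul_mem_DNN2 {S : Matrix (Fin 2) (Fin 2) ℝ} {c : ℝ} (hc : 0 ≤ c) (hS : S ∈ DNN2) :
    c • S ∈ DNN2 :=
  mem_DNN2_of_posSemidef ((posSemidef_of_mem_DNN2 hS).smul hc) (mul_nonneg hc (hS.1 0 1))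

/-- Edge-supported families of doubly nonnegative `2 × 2` blocks. -/
def edgeBlocks {t : ℕ} (G : SimpleGraph (Fin t)) :
    Set (Fin t → Fin t → Matrix (Fin 2) (Fin 2) ℝ) :=
  {S | ∀ i j, S i j ∈ DNN2 ∧ (¬(i < j ∧ G.Adj i j) → S i j = 0)}

/-- The linear map `S ↦ ∑ ι_{ij}(S_{ij})`. -/
def assemble {t : ℕ} (S : Fin t → Fin t → Matrix (Fin 2) (Fin 2) ℝ) :
    Matrix (Fin t) (Fin t) ℝ :=
  ∑ i, ∑ j, iota i j (S i j)

lemma assemble_add {t : ℕ} (S T : Fin t → Fin t → Matrix (Fin 2) (Fin 2) ℝ) :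
    assemble (S + T) = assemble S + assemble T := by
  simp [assemble, iota_eq_conj, Matrix.mul_add, Matrix.add_mul, Finset.sum_add_distrib]

lemma assemble_smul {t : ℕ} (c : ℝ) (S : Fin t → Fin t → Matrix (Fin 2) (Fin 2) ℝ) :
    assemble (c • S) = c • assemble S := by
  simp [assemble, iota_eq_conj, Finset.smul_sum]

lemma continuous_assemble {t : ℕ} : Continuous (assemble (t := t)) := by
  unfold assemble
  simp only [iota_eq_conj]
  fun_prop

lemma sum_entries_assemble {t : ℕ} (S : Fin t → Fin t → Matrix (Fin 2) (Fin 2) ℝ) :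
    ∑ r, ∑ s, assemble S r s = ∑ i, ∑ j, ∑ a, ∑ b, S i j a b := by
  have h : ∀ i j, ∑ r, ∑ s, iota i j (S i j) r s = ∑ a, ∑ b, S i j a b := fun i j => by
    rw [iota_eq_conj, sum_entries_conj _ (sum_pairRows i j)]
  let f : Matrix (Fin t) (Fin t) ℝ →+ ℝ :=
    { toFun := fun A => ∑ r, ∑ s, A r s
      map_zero' := by simp
      map_add' := by simp [Finset.sum_add_distrib] }
  calc ∑ r, ∑ s, assemble S r s = f (assemble S) := rfl
    _ = ∑ i, ∑ j, f (iota i j (S i j)) := by simp only [assemble, map_sum]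
    _ = _ := Finset.sum_congr rfl fun i _ => Finset.sum_congr rfl fun j _ => h i j

lemma assemble_mem_CP {t : ℕ} {G : SimpleGraph (Fin t)}
    {S : Fin t → Fin t → Matrix (Fin 2) (Fin 2) ℝ} (hS : S ∈ edgeBlocks G) :
    assemble S ∈ CP t :=
  sum_mem_CP _ _ fun i _ => sum_mem_CP _ _ fun j _ => by
    rw [iota_eq_conj]
    exact conj_mem_CP (DNN2_subset_CP (hS i j).1) _ (pairRows_nonneg i j)

lemma CP_subset_NonnegMat (n : ℕ) : CP n ⊆ NonnegMat n := by
  rintro _ ⟨k, B, hB, rfl⟩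
  exact ⟨by simp [Matrix.IsSymm, Matrix.transpose_mul],
    fun i j => by
      rw [Matrix.mul_apply]
      exact Finset.sum_nonneg fun x _ => mul_nonneg (hB x i) (hB x j)⟩

lemma iota_apply_of_lt {n : ℕ} {i j a b : Fin n} (hij : i < j) (hab : a < b)
    (S : Matrix (Fin 2) (Fin 2) ℝ) :
    iota a b S i j = if a = i ∧ b = j then S 0 1 else 0 := by
  simp only [iota, Matrix.of_apply]
  split_ifs <;> first | omega | simp

/-- Since distinct edges occupy distinct off-diagonal positions, an entrywise nonnegative element
of `SDD^G` is a sum of entrywise nonnegative blocks. -/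
lemma SDDGplus_eq_image {t : ℕ} (G : SimpleGraph (Fin t)) :
    SDDGplus G = assemble '' edgeBlocks G := by
  classical
  ext Y
  constructor
  · rintro ⟨⟨S, hS, rfl⟩, -, hY⟩
    refine ⟨fun i j => if i < j ∧ G.Adj i j then S i j else 0, fun i j => ⟨?_, ?_⟩, ?_⟩
    · by_cases h : i < j ∧ G.Adj i j
      · have hval := hY i j
        rw [Matrix.sum_apply, Finset.sum_eq_single i, Matrix.sum_apply,
          Finset.sum_eq_single j] at hval
        · rw [if_pos h, iota_apply_of_lt h.1 h.1, if_pos ⟨rfl, rfl⟩] at hval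
          simpa [h] using mem_DNN2_of_posSemidef (hS i j) hval
        · intro b _ hb
          split_ifs with hc
          · rw [iota_apply_of_lt h.1 hc.1, if_neg fun e => hb e.2]
          · rfl
        · simp
        · intro a _ ha
          rw [Matrix.sum_apply]
          refine Finset.sum_eq_zero fun b _ => ?_
          split_ifs with hc
          · rw [iota_apply_of_lt h.1 hc.1, if_neg fun e => ha e.1]
          · rfl
        · simp
      · simp [h, DNN2]
    · intro h
      exact if_neg h
    · refine Finset.sum_congr rfl fun i _ => Finset.sum_congr rfl fun j _ => ?_
      dsimp only
      split_ifs
      · rfl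
      · simp [iota_eq_conj]
  · rintro ⟨S, hS, rfl⟩
    refine ⟨⟨S, fun i j => posSemidef_of_mem_DNN2 (hS i j).1, ?_⟩,
      CP_subset_NonnegMat t (assemble_mem_CP hS)⟩
    refine Finset.sum_congr rfl fun i _ => Finset.sum_congr rfl fun j _ => ?_
    split_ifs with h
    · rfl
    · simp [(hS i j).2 h, iota_eq_conj]

lemma SDDGplusU_eq_image {t n : ℕ} (G : SimpleGraph (Fin t)) (U : Matrix (Fin t) (Fin n) ℝ) :
    SDDGplusU G U = (fun S => Uᵀ * assemble S * U) '' edgeBlocks G := by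
  ext X
  simp [SDDGplusU, SDDGplus_eq_image, eq_comm]

lemma isClosed_edgeBlocks {t : ℕ} (G : SimpleGraph (Fin t)) : IsClosed (edgeBlocks G) := by
  simp only [edgeBlocks, ofPred_forall, ofPred_and]
  have hc : ∀ i j, Continuous fun S : Fin t → Fin t → Matrix (Fin 2) (Fin 2) ℝ => S i j :=
    fun i j => by fun_prop
  exact isClosed_iInter fun i => isClosed_iInter fun j =>
    (isClosed_DNN2.preimage (hc i j)).inter
      (isClosed_iInter fun _ => isClosed_eq (hc i j) continuous_const)

lemma isCompact_edgeBlocks_sum_le {t : ℕ} (G : SimpleGraph (Fin t)) (c : ℝ) :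
    IsCompact (edgeBlocks G ∩ {S | ∑ i, ∑ j, ∑ a, ∑ b, S i j a b ≤ c}) := by
  have hbox : IsCompact (Set.Icc (fun _ _ _ _ => 0 : Fin t → Fin t → Fin 2 → Fin 2 → ℝ)
      (fun _ _ _ _ => c)) := isCompact_Icc
  refine IsCompact.of_isClosed_subset (X := Fin t → Fin t → Fin 2 → Fin 2 → ℝ) hbox
    ((isClosed_edgeBlocks G).inter (isClosed_le ?_ continuous_const)) ?_
  · have hc : ∀ i j a b, Continuous
        fun S : Fin t → Fin t → Matrix (Fin 2) (Fin 2) ℝ => S i j a b :=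
      fun i j a b => Continuous.matrix_elem (by fun_prop) a b
    exact continuous_finsetSum _ fun i _ => continuous_finsetSum _ fun j _ =>
      continuous_finsetSum _ fun a _ => continuous_finsetSum _ fun b _ => hc i j a b
  · rintro S ⟨hS, hle⟩
    have h0 : ∀ i j a b, 0 ≤ S i j a b := fun i j => (hS i j).1.1
    refine ⟨h0, fun i j a b => le_trans ?_ hle⟩
    calc S i j a b ≤ ∑ b, S i j a b :=
          Finset.single_le_sum (f := fun b => S i j a b) (fun b _ => h0 i j a b)
            (Finset.mem_univ b)
      _ ≤ ∑ a, ∑ b, S i j a b :=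
          Finset.single_le_sum (f := fun a => ∑ b, S i j a b)
            (fun a _ => Finset.sum_nonneg fun b _ => h0 i j a b) (Finset.mem_univ a)
      _ ≤ ∑ j, ∑ a, ∑ b, S i j a b :=
          Finset.single_le_sum (f := fun j => ∑ a, ∑ b, S i j a b)
            (fun j _ => Finset.sum_nonneg fun a _ => Finset.sum_nonneg fun b _ => h0 i j a b)
            (Finset.mem_univ j)
      _ ≤ ∑ i, ∑ j, ∑ a, ∑ b, S i j a b :=
          Finset.single_le_sum (f := fun i => ∑ j, ∑ a, ∑ b, S i j a b)
            (fun i _ => Finset.sum_nonneg fun j _ => Finset.sum_nonneg fun a _ =>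
              Finset.sum_nonneg fun b _ => h0 i j a b)
            (Finset.mem_univ i)

/-- A set is closed if its intersection with every sublevel set of some continuous function is. -/
lemma isClosed_of_isClosed_inter_le {α : Type*} [TopologicalSpace α] {s : Set α} {f : α → ℝ}
    (hf : Continuous f) (h : ∀ c, IsClosed (s ∩ {x | f x ≤ c})) : IsClosed s := by
  refine isClosed_of_closure_subset fun x hx => ?_
  have hlt : {y | f y < f x + 1} ∈ nhds x :=
    (isOpen_lt hf continuous_const).mem_nhds (by simp)
  have hx' : x ∈ closure (s ∩ {y | f y ≤ f x + 1}) := by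
    rw [mem_closure_iff_nhds] at hx ⊢
    intro V hV
    obtain ⟨y, ⟨hyV, hylt⟩, hys⟩ := hx _ (Filter.inter_mem hV hlt)
    exact ⟨y, hyV, hys, (show f y < f x + 1 from hylt).le⟩
  exact ((h _).closure_subset hx').1

lemma isClosed_SDDGplusU {t n : ℕ} (G : SimpleGraph (Fin t)) (U : Matrix (Fin t) (Fin n) ℝ)
    (hrow : ∀ i, ∑ j, U i j = 1) : IsClosed (SDDGplusU G U) := by
  have hcont : Continuous fun X : Matrix (Fin n) (Fin n) ℝ => ∑ r, ∑ s, X r s :=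
    continuous_finsetSum _ fun r _ => continuous_finsetSum _ fun s _ =>
      continuous_id.matrix_elem r s
  refine isClosed_of_isClosed_inter_le hcont fun c => ?_
  have himage : SDDGplusU G U ∩ {X | ∑ r, ∑ s, X r s ≤ c} =
      (fun S => Uᵀ * assemble S * U) ''
        (edgeBlocks G ∩ {S | ∑ i, ∑ j, ∑ a, ∑ b, S i j a b ≤ c}) := by
    rw [SDDGplusU_eq_image, ← Set.image_inter_preimage]
    congr 2
    ext S
    simp [sum_entries_conj U hrow, sum_entries_assemble]
  rw [himage]
  refine ((isCompact_edgeBlocks_sum_le G c).image ?_).isClosed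
  exact (continuous_const.matrix_mul continuous_assemble).matrix_mul continuous_const

/-- `SDD^G₊(U)` is a closed convex sub-cone of the completely positive cone `CPⁿ`. -/
theorem SDDGplusU_closed_subcone_CP {t n : ℕ} (G : SimpleGraph (Fin t))
    (U : Matrix (Fin t) (Fin n) ℝ)
    (hU : ∀ i j, 0 ≤ U i j) (hrow : ∀ i, ∑ j, U i j = 1) :
    IsClosed (SDDGplusU G U) ∧
    (∀ X ∈ SDDGplusU G U, ∀ Y ∈ SDDGplusU G U, X + Y ∈ SDDGplusU G U) ∧
    (∀ c : ℝ, 0 ≤ c → ∀ X ∈ SDDGplusU G U, c • X ∈ SDDGplusU G U) ∧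
    SDDGplusU G U ⊆ CP n := by
  refine ⟨isClosed_SDDGplusU G U hrow, ?_, ?_, ?_⟩ <;> rw [SDDGplusU_eq_image]
  · rintro _ ⟨S, hS, rfl⟩ _ ⟨T, hT, rfl⟩
    refine ⟨S + T, fun i j => ⟨add_mem_DNN2 (hS i j).1 (hT i j).1, fun h => ?_⟩, ?_⟩
    · simp [(hS i j).2 h, (hT i j).2 h]
    · simp [assemble_add, Matrix.mul_add, Matrix.add_mul]
  · rintro c hc _ ⟨S, hS, rfl⟩
    refine ⟨c • S, fun i j => ⟨smul_mem_DNN2 hc (hS i j).1, fun h => ?_⟩, ?_⟩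
    · simp [(hS i j).2 h]
    · simp [assemble_smul]
  · rintro _ ⟨S, hS, rfl⟩
    exact conj_mem_CP (assemble_mem_CP hS) U hU

end
end
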